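/- An infinite word u over a finite alphabet has linear subword complexity (p_u(n) = O(n)) if and only if there exist languages S and T, each containing at most a constant number of words of each length, such that every factor of u is the concatenation of a word of S and a word of T. In other words, 𝓦_2 = 𝓟(1). -/

import Mathlib

/-!
If `Fac(u) ⊆ S·T`, a factor of length `n` is determined by the length of its left part and by two
bounded choices, so linear complexity follows by summing over the `n + 1` splittings.

Conversely, suppose `p_u(n) ≤ C n` and view the factors of length `N` as the vertices, and those of
length `N + 1` as the edges, of a graph in which `u` traces a walk. The edges by which the walk
enters each vertex for the first time form a spanning tree, and along a tree edge the depth grows by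
one. Hence `m` consecutive steps of the walk either use an edge off the tree or meet every residue
class of the depth modulo `m`. Choosing `N` of order `m` with `p_u(N + 1) - p_u(N)` bounded, there
are boundedly many edges off the tree, and a sparsest residue class has boundedly many vertices; so
boundedly many vertices are met by every `m` steps. Fixing one position for each of them cuts every
factor whose length is comparable to `m`, at a depth between `m` and `2m`, into a word ending and a
word beginning at a fixed position. Taking `m = 2 ^ k`, only boundedly many scales `k` contribute
words of a given length.
-/

/-- The factor of the infinite word `u` of length `n` starting at position `i`. -/
def wordSeg {α : Type*} (u : ℕ → α) (i n : ℕ) : List α :=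
  (List.range n).map (fun t => u (i + t))

/-- The set of (finite) factors of the infinite word `u`. -/
def Factors {α : Type*} (u : ℕ → α) : Set (List α) :=
  {w | ∃ i, w = wordSeg u i w.length}

/-- Subword complexity: the number of distinct factors of `u` of length `n`. -/
noncomputable def complexity {α : Type*} (u : ℕ → α) (n : ℕ) : ℕ :=
  {w : List α | w.length = n ∧ w ∈ Factors u}.ncard

/-- `p_L(n)`: the number of words of length `n` in the language `L`. -/
noncomputable def langComplexity {α : Type*} (L : Set (List α)) (n : ℕ) : ℕ :=
  {w ∈ L | w.length = n}.ncard

lemma exists_ncard_fiber_le {β ι : Type*} [Fintype ι] [Nonempty ι] {V : Set β} {K : ℕ}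
    (f : β → ι) (hV : V.Finite) (hcard : V.ncard ≤ Fintype.card ι * K) :
    ∃ c, {v ∈ V | f v = c}.ncard ≤ K := by
  classical
  obtain ⟨V, rfl⟩ := hV.exists_finset_coe
  rw [Set.ncard_coe_finset] at hcard
  obtain ⟨c, -, hc⟩ :=
    Finset.exists_card_fiber_le_of_card_le_mul (f := f) Finset.univ_nonempty hcard
  exact ⟨c, by rwa [← Set.ncard_coe_finset, Finset.coe_filter] at hc⟩

lemma exists_apply_succ_le_apply_add {f : ℕ → ℕ} {a k D : ℕ} (hk : 0 < k)
    (hf : f (a + k) ≤ f a + k * D) :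
    ∃ N, a ≤ N ∧ N < a + k ∧ f (N + 1) ≤ f N + D := by
  have htelescope : f a + ∑ i ∈ Finset.range k, f (a + i + 1) =
      ∑ i ∈ Finset.range k, f (a + i) + f (a + k) := by
    rw [← Finset.sum_range_succ, Finset.sum_range_succ', add_comm]
    rfl
  have hsum : ∑ i ∈ Finset.range k, f (a + i + 1) ≤ ∑ i ∈ Finset.range k, (f (a + i) + D) := by
    rw [Finset.sum_add_distrib, Finset.sum_const, Finset.card_range, smul_eq_mul]
    omega
  obtain ⟨i, hi, hstep⟩ :=
    Finset.exists_le_of_sum_le (Finset.nonempty_range_iff.2 hk.ne') hsum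
  exact ⟨a + i, by omega, by have := Finset.mem_range.1 hi; omega, hstep⟩

lemma exists_mul_two_pow_le_lt {a n : ℕ} (ha : 0 < a) (han : a ≤ n) :
    ∃ k, a * 2 ^ k ≤ n ∧ n < a * 2 ^ (k + 1) := by
  refine ⟨Nat.log 2 (n / a), ?_, ?_⟩
  · rw [mul_comm, ← Nat.le_div_iff_mul_le ha]
    exact Nat.pow_log_le_self 2 (Nat.div_pos han ha).ne'
  · rw [mul_comm, ← Nat.div_lt_iff_lt_mul ha]
    exact Nat.lt_pow_succ_log_self one_lt_two _

section Factors

variable {α : Type*} {u : ℕ → α}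

@[simp]
lemma length_wordSeg (i n : ℕ) : (wordSeg u i n).length = n := by
  simp [wordSeg]

lemma wordSeg_eq_wordSeg_iff {i j n : ℕ} :
    wordSeg u i n = wordSeg u j n ↔ ∀ t < n, u (i + t) = u (j + t) := by
  simp [wordSeg]

lemma wordSeg_add (i a b : ℕ) :
    wordSeg u i (a + b) = wordSeg u i a ++ wordSeg u (i + a) b := by
  simp [wordSeg, List.range_add, Function.comp_def, Nat.add_assoc]

lemma wordSeg_add_eq_of_wordSeg_eq {i j N a n : ℕ} (h : wordSeg u i N = wordSeg u j N)
    (haN : a + n ≤ N) : wordSeg u (i + a) n = wordSeg u (j + a) n := by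
  rw [wordSeg_eq_wordSeg_iff] at h ⊢
  intro t ht
  simpa only [Nat.add_assoc] using h (a + t) (by omega)

lemma complexity_eq_ncard_range (u : ℕ → α) (n : ℕ) :
    complexity u n = (Set.range (wordSeg u · n)).ncard := by
  rw [complexity]
  congr 1
  ext w
  constructor
  · rintro ⟨rfl, i, hi⟩
    exact ⟨i, hi.symm⟩
  · rintro ⟨i, rfl⟩
    exact ⟨length_wordSeg i n, i, by simp only [length_wordSeg]⟩

lemma finite_range_wordSeg [Finite α] (u : ℕ → α) (n : ℕ) :
    (Set.range (wordSeg u · n)).Finite :=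
  (List.finite_length_eq α n).subset (Set.range_subset_iff.2 fun i => length_wordSeg i n)

end Factors

section LanguageComplexity

open Finset.HasAntidiagonal

variable {α : Type*}

lemma complexity_eq_langComplexity (u : ℕ → α) (n : ℕ) :
    complexity u n = langComplexity (Factors u) n := by
  simp only [complexity, langComplexity, and_comm]

lemma langComplexity_le_card_of_image {ι : Type*} {L : Set (List α)} {n : ℕ} (P : Finset ι)
    (g : ι → List α) (hL : ∀ w ∈ L, w.length = n → ∃ p ∈ P, g p = w) :
    langComplexity L n ≤ P.card := by
  have hsub : {w ∈ L | w.length = n} ⊆ g '' P := fun w hw => hL w hw.1 hw.2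
  calc langComplexity L n ≤ (g '' P).ncard := Set.ncard_le_ncard hsub (P.finite_toSet.image g)
    _ ≤ (P : Set ι).ncard := Set.ncard_image_le P.finite_toSet
    _ = P.card := Set.ncard_coe_finset P

lemma langComplexity_le_ncard {L : Set (List α)} (hL : L.Finite) (n : ℕ) :
    langComplexity L n ≤ L.ncard :=
  Set.ncard_le_ncard (Set.sep_subset _ _) hL

lemma langComplexity_union_le (L M : Set (List α)) (n : ℕ) :
    langComplexity (L ∪ M) n ≤ langComplexity L n + langComplexity M n := by
  have hsplit : {w ∈ L ∪ M | w.length = n} = {w ∈ L | w.length = n} ∪ {w ∈ M | w.length = n} :=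
    Set.ext fun _ => or_and_right
  rw [langComplexity, hsplit]
  exact Set.ncard_union_le _ _

/-- The words of length in `[2 ^ k, 2 ^ (k + c))` of the languages `L k`, collected over all
scales `k`. It assembles the languages found at the individual scales into one of bounded
complexity. -/
def dyadicUnion (L : ℕ → Set (List α)) (c : ℕ) : Set (List α) :=
  ⋃ k, {w ∈ L k | 2 ^ k ≤ w.length ∧ w.length < 2 ^ (k + c)}

variable [Finite α]

lemma finite_sep_length_eq (L : Set (List α)) (n : ℕ) : {w ∈ L | w.length = n}.Finite :=
  (List.finite_length_eq α n).subset fun _ hw => hw.2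

lemma langComplexity_mono {L M : Set (List α)} (hLM : L ⊆ M) (n : ℕ) :
    langComplexity L n ≤ langComplexity M n :=
  Set.ncard_le_ncard (fun _ hw => ⟨hLM hw.1, hw.2⟩) (finite_sep_length_eq M n)

lemma langComplexity_image2_append_le (S T : Set (List α)) (n : ℕ) :
    langComplexity (Set.image2 (· ++ ·) S T) n ≤
      ∑ ab ∈ antidiagonal n, langComplexity S ab.1 * langComplexity T ab.2 := by
  let splitAt (ab : ℕ × ℕ) : Set (List α × List α) :=
    {s ∈ S | s.length = ab.1} ×ˢ {t ∈ T | t.length = ab.2}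
  have hfin (ab : ℕ × ℕ) : (splitAt ab).Finite :=
    (finite_sep_length_eq S ab.1).prod (finite_sep_length_eq T ab.2)
  have hsub : {w ∈ Set.image2 (· ++ ·) S T | w.length = n} ⊆
      ⋃ ab ∈ antidiagonal n, (fun st => st.1 ++ st.2) '' splitAt ab := by
    rintro _ ⟨⟨s, hs, t, ht, rfl⟩, hlen⟩
    rw [List.length_append] at hlen
    exact Set.mem_biUnion (x := (s.length, t.length)) (mem_antidiagonal.2 hlen)
      ⟨(s, t), ⟨⟨hs, rfl⟩, ⟨ht, rfl⟩⟩, rfl⟩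
  calc langComplexity (Set.image2 (· ++ ·) S T) n
      ≤ (⋃ ab ∈ antidiagonal n, (fun st => st.1 ++ st.2) '' splitAt ab).ncard :=
        Set.ncard_le_ncard hsub
          ((Finset.finite_toSet _).biUnion fun ab _ => (hfin ab).image _)
    _ ≤ ∑ ab ∈ antidiagonal n, ((fun st => st.1 ++ st.2) '' splitAt ab).ncard :=
        Finset.set_ncard_biUnion_le _ _
    _ ≤ ∑ ab ∈ antidiagonal n, langComplexity S ab.1 * langComplexity T ab.2 :=
        Finset.sum_le_sum fun ab _ => (Set.ncard_image_le (hfin ab)).trans_eq Set.ncard_prod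

lemma complexity_le_of_factors_subset_image2 {u : ℕ → α} {S T : Set (List α)} {C D : ℕ}
    (hS : ∀ n, langComplexity S n ≤ C) (hT : ∀ n, langComplexity T n ≤ D)
    (h : Factors u ⊆ Set.image2 (· ++ ·) S T) (n : ℕ) :
    complexity u n ≤ (n + 1) * (C * D) :=
  calc complexity u n = langComplexity (Factors u) n := complexity_eq_langComplexity u n
    _ ≤ langComplexity (Set.image2 (· ++ ·) S T) n := langComplexity_mono h n
    _ ≤ ∑ ab ∈ antidiagonal n, langComplexity S ab.1 * langComplexity T ab.2 :=
        langComplexity_image2_append_le S T n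
    _ ≤ (antidiagonal n).card • (C * D) :=
        Finset.sum_le_card_nsmul _ _ _ fun ab _ => Nat.mul_le_mul (hS ab.1) (hT ab.2)
    _ = (n + 1) * (C * D) := by rw [Finset.Nat.card_antidiagonal, smul_eq_mul]

lemma langComplexity_dyadicUnion_le {L : ℕ → Set (List α)} {K : ℕ}
    (hL : ∀ k n, langComplexity (L k) n ≤ K) (c n : ℕ) :
    langComplexity (dyadicUnion L c) n ≤ c * K := by
  let scales := Finset.Ico (Nat.log 2 n + 1 - c) (Nat.log 2 n + 1)
  have hsub : {w ∈ dyadicUnion L c | w.length = n} ⊆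
      ⋃ k ∈ scales, {w ∈ L k | w.length = n} := by
    rintro w ⟨hw, rfl⟩
    obtain ⟨k, hwk, hlower, hupper⟩ := Set.mem_iUnion.1 hw
    have hk : k ≤ Nat.log 2 w.length := Nat.le_log_of_pow_le one_lt_two hlower
    have hlog : Nat.log 2 w.length < k + c :=
      Nat.log_lt_of_lt_pow ((Nat.two_pow_pos k).trans_le hlower).ne' hupper
    exact Set.mem_biUnion (Finset.mem_Ico.2 (by omega)) ⟨hwk, rfl⟩
  calc langComplexity (dyadicUnion L c) n
      ≤ (⋃ k ∈ scales, {w ∈ L k | w.length = n}).ncard :=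
        Set.ncard_le_ncard hsub
          (scales.finite_toSet.biUnion fun k _ => finite_sep_length_eq (L k) n)
    _ ≤ ∑ k ∈ scales, langComplexity (L k) n := Finset.set_ncard_biUnion_le _ _
    _ ≤ scales.card • K := Finset.sum_le_card_nsmul _ _ _ fun k _ => hL k n
    _ ≤ c * K := Nat.mul_le_mul_right K (by rw [Nat.card_Ico]; omega)

end LanguageComplexity

section Walk

variable {β : Type*}

/-- The time of the first visit of the walk `x` to the vertex `v` (`0` if `v` is never visited),
from which the spanning tree of the walk is built. -/
noncomputable def firstVisit (x : ℕ → β) (v : β) : ℕ :=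
  sInf {i | x i = v}

lemma firstVisit_apply_le (x : ℕ → β) (i : ℕ) : firstVisit x (x i) ≤ i :=
  Nat.sInf_le rfl

lemma apply_firstVisit {x : ℕ → β} {v : β} (hv : v ∈ Set.range x) : x (firstVisit x v) = v :=
  Nat.sInf_mem hv

/-- The depth of `v` in the spanning tree of the walk `x` in which the parent of a vertex is the
one from which the walk enters it for the first time; the root is `x 0`. Consecutive steps of the
walk are controlled by following the depth. -/
noncomputable def treeDepth (x : ℕ → β) (v : β) : ℕ :=
  match h : firstVisit x v with
  | 0 => 0
  | k + 1 => treeDepth x (x k) + 1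
termination_by firstVisit x v
decreasing_by
  have := firstVisit_apply_le x k
  omega

lemma treeDepth_of_firstVisit_eq_succ {x : ℕ → β} {v : β} {k : ℕ}
    (h : firstVisit x v = k + 1) : treeDepth x v = treeDepth x (x k) + 1 := by
  rw [treeDepth]
  split <;> simp_all

/-- The edges traversed by the walk `x`, as ordered pairs; for the walk through the factors of
length `N` of a word they are counted by its factors of length `N + 1`. -/
def walkEdges (x : ℕ → β) : Set (β × β) :=
  Set.range fun i => (x i, x (i + 1))

/-- The edges of the walk `x` that do not lead one level down in its spanning tree; they are the
exceptional ones in the count, none of them belonging to the tree. -/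
def unevenEdges (x : ℕ → β) : Set (β × β) :=
  {e ∈ walkEdges x | treeDepth x e.2 ≠ treeDepth x e.1 + 1}

lemma range_subset_insert_snd_image_sdiff (x : ℕ → β) :
    Set.range x ⊆ insert (x 0) (Prod.snd '' (walkEdges x \ unevenEdges x)) := by
  intro v hv
  have hfirst := apply_firstVisit hv
  cases hk : firstVisit x v with
  | zero => exact Or.inl (by rw [← hfirst, hk])
  | succ k =>
    rw [hk] at hfirst
    refine Or.inr ⟨(x k, v), ⟨⟨k, by simp only [hfirst]⟩, fun huneven => ?_⟩, rfl⟩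
    exact huneven.2 (treeDepth_of_firstVisit_eq_succ hk)

lemma ncard_unevenEdges_add_ncard_range_le {x : ℕ → β} (hE : (walkEdges x).Finite) :
    (unevenEdges x).ncard + (Set.range x).ncard ≤ (walkEdges x).ncard + 1 := by
  have hsub : unevenEdges x ⊆ walkEdges x := Set.sep_subset _ _
  have hrange : (Set.range x).ncard ≤ (walkEdges x \ unevenEdges x).ncard + 1 :=
    calc (Set.range x).ncard
        ≤ (insert (x 0) (Prod.snd '' (walkEdges x \ unevenEdges x))).ncard :=
          Set.ncard_le_ncard (range_subset_insert_snd_image_sdiff x) ((hE.sdiff.image _).insert _)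
      _ ≤ (Prod.snd '' (walkEdges x \ unevenEdges x)).ncard + 1 := Set.ncard_insert_le _ _
      _ ≤ (walkEdges x \ unevenEdges x).ncard + 1 :=
          Nat.add_le_add_right (Set.ncard_image_le hE.sdiff) 1
  have hsplit := Set.ncard_sdiff_add_ncard_of_subset hsub hE
  omega

lemma treeDepth_apply_add {x : ℕ → β} {i t : ℕ}
    (h : ∀ s < t, (x (i + s), x (i + s + 1)) ∉ unevenEdges x) :
    treeDepth x (x (i + t)) = treeDepth x (x i) + t := by
  induction t with
  | zero => rfl
  | succ t ih =>
    have hstep : treeDepth x (x (i + t + 1)) = treeDepth x (x (i + t)) + 1 := by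
      by_contra hne
      exact h t t.lt_succ_self ⟨⟨i + t, rfl⟩, hne⟩
    rw [← Nat.add_assoc, hstep, ih fun s hs => h s (by omega), Nat.add_assoc]

/-- With `E` edges and `V ≤ m * K` vertices, `E - V + 1 + K` vertices suffice: the heads of the
uneven edges and a sparsest class of the depth modulo `m`. -/
lemma exists_finset_forall_exists_apply_add_mem {x : ℕ → β} (hE : (walkEdges x).Finite) {m K : ℕ}
    [NeZero m] (hV : (Set.range x).ncard ≤ m * K) :
    ∃ R : Finset β, R.card + (Set.range x).ncard ≤ (walkEdges x).ncard + 1 + K ∧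
      ∀ i, ∃ s ≤ m, x (i + s) ∈ R := by
  have hVfin : (Set.range x).Finite :=
    (hE.image Prod.fst).subset (Set.range_subset_iff.2 fun i => ⟨_, ⟨i, rfl⟩, rfl⟩)
  have hUfin : (unevenEdges x).Finite := hE.subset (Set.sep_subset _ _)
  obtain ⟨c, hc⟩ := exists_ncard_fiber_le (fun v => (treeDepth x v : ZMod m)) hVfin
    (by rwa [ZMod.card])
  set level : Set β := {v ∈ Set.range x | (treeDepth x v : ZMod m) = c}
  obtain ⟨R, hR⟩ := ((hUfin.image Prod.snd).union
    (hVfin.subset (Set.sep_subset _ _) : level.Finite)).exists_finset_coe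
  refine ⟨R, ?_, fun i => ?_⟩
  · have hRcard : R.card ≤ (unevenEdges x).ncard + K :=
      calc R.card = (Prod.snd '' unevenEdges x ∪ level).ncard := by
            rw [← hR, Set.ncard_coe_finset]
        _ ≤ (Prod.snd '' unevenEdges x).ncard + level.ncard := Set.ncard_union_le _ _
        _ ≤ (unevenEdges x).ncard + K := Nat.add_le_add (Set.ncard_image_le hUfin) hc
    have hUcard := ncard_unevenEdges_add_ncard_range_le hE
    omega
  · simp only [← Finset.mem_coe, hR]
    by_cases huneven : ∃ s < m, (x (i + s), x (i + s + 1)) ∈ unevenEdges x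
    · obtain ⟨s, hs, hmem⟩ := huneven
      exact ⟨s + 1, hs, Or.inl ⟨_, hmem, rfl⟩⟩
    · push Not at huneven
      set s := (c - treeDepth x (x i) : ZMod m).val with hs_def
      have hs : s < m := ZMod.val_lt _
      refine ⟨s, hs.le, Or.inr ⟨⟨i + s, rfl⟩, ?_⟩⟩
      rw [treeDepth_apply_add fun r hr => huneven r (hr.trans hs), Nat.cast_add, hs_def,
        ZMod.natCast_zmod_val, add_sub_cancel]

end Walk

section Cuts

variable {α : Type*} {u : ℕ → α}

lemma walkEdges_wordSeg (u : ℕ → α) (N : ℕ) :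
    walkEdges (wordSeg u · N) =
      (fun w => (w.take N, w.drop 1)) '' Set.range (wordSeg u · (N + 1)) := by
  rw [walkEdges, ← Set.range_comp]
  congr 1
  funext i
  have hdrop : (wordSeg u i (N + 1)).drop 1 = wordSeg u (i + 1) N := by
    rw [Nat.add_comm N, wordSeg_add, List.drop_left' (length_wordSeg i 1)]
  have htake : (wordSeg u i (N + 1)).take N = wordSeg u i N := by
    rw [wordSeg_add, List.take_left' (length_wordSeg i N)]
  simp only [Function.comp_apply, htake, hdrop]

lemma exists_finset_forall_exists_wordSeg_mem [Finite α] {N m K D : ℕ} [NeZero m]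
    (hK : complexity u N ≤ m * K) (hD : complexity u (N + 1) ≤ complexity u N + D) :
    ∃ R : Finset (List α), R.card ≤ D + 1 + K ∧ ∀ i, ∃ s ≤ m, wordSeg u (i + s) N ∈ R := by
  have hfin := finite_range_wordSeg u (N + 1)
  have hE : (walkEdges (wordSeg u · N)).Finite := walkEdges_wordSeg u N ▸ hfin.image _
  have hEcard : (walkEdges (wordSeg u · N)).ncard ≤ complexity u (N + 1) := by
    rw [walkEdges_wordSeg, complexity_eq_ncard_range]
    exact Set.ncard_image_le hfin
  obtain ⟨R, hRcard, hR⟩ := exists_finset_forall_exists_apply_add_mem hE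
    (complexity_eq_ncard_range u N ▸ hK)
  rw [← complexity_eq_ncard_range] at hRcard
  exact ⟨R, by omega, hR⟩

/-- `P` is a set of cuts at scale `m` for the factors of `u` of length `n`: each of them has an
occurrence, starting at `j` say, with a position of `P` in `[j + m, j + 2 * m]`. Cutting there
yields the two parts of a factorization. -/
def IsCutSet (u : ℕ → α) (m n : ℕ) (P : Finset ℕ) : Prop :=
  ∀ i, ∃ p ∈ P, ∃ j, j + m ≤ p ∧ p ≤ j + 2 * m ∧ wordSeg u j n = wordSeg u i n

lemma exists_isCutSet_of_forall_exists_wordSeg_mem {m n N : ℕ} (hN : m + n ≤ N)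
    {R : Finset (List α)} (hR : ∀ i, ∃ s ≤ m, wordSeg u (i + s) N ∈ R) :
    ∃ P, IsCutSet u m n P ∧ P.card ≤ R.card + 1 := by
  classical
  let position := Function.invFun (wordSeg u · N)
  -- The cut `2 * m` serves the factors that start before `m`, where there is no room to the left.
  refine ⟨insert (2 * m) (R.image (position · + 2 * m)), fun i => ?_,
    (Finset.card_insert_le _ _).trans (Nat.add_le_add_right Finset.card_image_le 1)⟩
  rcases lt_or_ge i m with hi | hi
  · exact ⟨2 * m, Finset.mem_insert_self _ _, i, by omega, by omega, rfl⟩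
  · obtain ⟨s, hs, hmem⟩ := hR (i - m)
    set r := position (wordSeg u (i - m + s) N)
    have hr : wordSeg u r N = wordSeg u (i - m + s) N :=
      Function.invFun_eq (f := (wordSeg u · N)) ⟨i - m + s, rfl⟩
    refine ⟨r + 2 * m, Finset.mem_insert_of_mem (Finset.mem_image_of_mem _ hmem), r + (m - s),
      by omega, by omega, ?_⟩
    rw [wordSeg_add_eq_of_wordSeg_eq hr (by omega : m - s + n ≤ N)]
    congr 1
    omega

lemma exists_isCutSet_card_le [Finite α] {C : ℕ} (hC : ∀ n, 1 ≤ n → complexity u n ≤ C * n)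
    (m a : ℕ) [NeZero m] :
    ∃ P, IsCutSet u m (a * m) P ∧ P.card ≤ 2 * (a + 2) * C + 2 := by
  have hm : 0 < m := Nat.pos_of_neZero m
  set b := (a + 1) * m with hb
  have hb_pos : 0 < b := by positivity
  have hgrowth : complexity u (b + b) ≤ complexity u b + b * (2 * C) := by
    have := hC (b + b) (by omega)
    linarith
  obtain ⟨N, hbN, hNb, hstep⟩ := exists_apply_succ_le_apply_add hb_pos hgrowth
  have hN : complexity u N ≤ m * (2 * (a + 1) * C) :=
    calc complexity u N ≤ C * N := hC N (by omega)
      _ ≤ C * (b + b) := Nat.mul_le_mul_left C hNb.le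
      _ = m * (2 * (a + 1) * C) := by rw [hb]; ring
  obtain ⟨R, hRcard, hR⟩ := exists_finset_forall_exists_wordSeg_mem hN hstep
  obtain ⟨P, hP, hPcard⟩ :=
    exists_isCutSet_of_forall_exists_wordSeg_mem (by linarith : m + a * m ≤ N) hR
  exact ⟨P, hP, by linarith⟩

/-- The factors of `u` with an occurrence that ends just before a position of `P`: the left parts
created by cutting at `P`. -/
def wordsEndingAt (u : ℕ → α) (P : Finset ℕ) : Set (List α) :=
  {w | ∃ j, j + w.length ∈ P ∧ w = wordSeg u j w.length}

/-- The factors of `u` with an occurrence that starts at a position of `P`: the right parts created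
by cutting at `P`. -/
def wordsStartingAt (u : ℕ → α) (P : Finset ℕ) : Set (List α) :=
  {w | ∃ p ∈ P, w = wordSeg u p w.length}

lemma langComplexity_wordsEndingAt_le (u : ℕ → α) (P : Finset ℕ) (n : ℕ) :
    langComplexity (wordsEndingAt u P) n ≤ P.card := by
  refine langComplexity_le_card_of_image P (fun p => wordSeg u (p - n) n) ?_
  rintro w ⟨j, hj, hw⟩ rfl
  exact ⟨j + w.length, hj, by rw [Nat.add_sub_cancel]; exact hw.symm⟩

lemma langComplexity_wordsStartingAt_le (u : ℕ → α) (P : Finset ℕ) (n : ℕ) :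
    langComplexity (wordsStartingAt u P) n ≤ P.card := by
  refine langComplexity_le_card_of_image P (fun p => wordSeg u p n) ?_
  rintro w ⟨p, hp, hw⟩ rfl
  exact ⟨p, hp, hw.symm⟩

lemma IsCutSet.exists_eq_append {m n : ℕ} {P : Finset ℕ} (hP : IsCutSet u m n P) {w : List α}
    (hw : w ∈ Factors u) (hmw : 2 * m ≤ w.length) (hwn : w.length ≤ n) :
    ∃ s ∈ wordsEndingAt u P, ∃ t ∈ wordsStartingAt u P,
      w = s ++ t ∧ m ≤ s.length ∧ s.length ≤ 2 * m := by
  obtain ⟨i, hi⟩ := hw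
  obtain ⟨p, hp, j, hlower, hupper, hj⟩ := hP i
  obtain ⟨d, rfl⟩ := Nat.exists_eq_add_of_le (show j ≤ p by omega)
  have hw_eq : w = wordSeg u j (d + (w.length - d)) := by
    rw [Nat.add_sub_cancel' (by omega)]
    exact hi.trans (wordSeg_add_eq_of_wordSeg_eq (a := 0) hj (by omega)).symm
  rw [wordSeg_add] at hw_eq
  refine ⟨wordSeg u j d, ⟨j, ?_, ?_⟩, wordSeg u (j + d) (w.length - d), ⟨j + d, hp, ?_⟩,
    hw_eq, ?_, ?_⟩ <;> simp only [length_wordSeg]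
  exacts [hp, by omega, by omega]

lemma exists_langComplexity_le_of_isCutSet [Finite α] {P : ℕ → Finset ℕ} {K : ℕ}
    (hP : ∀ k, IsCutSet u (2 ^ k) (8 * 2 ^ k) (P k)) (hK : ∀ k, (P k).card ≤ K) :
    ∃ (S T : Set (List α)) (C : ℕ),
      (∀ n, langComplexity S n ≤ C) ∧ (∀ n, langComplexity T n ≤ C) ∧
      ∀ w ∈ Factors u, ∃ s ∈ S, ∃ t ∈ T, w = s ++ t := by
  -- Words of length less than `4` lie below the smallest scale.
  let short : Set (List α) := {w | w.length < 4}
  have hbound {L : ℕ → Set (List α)} (hL : ∀ k n, langComplexity (L k) n ≤ (P k).card) (n : ℕ) :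
      langComplexity (short ∪ dyadicUnion L 3) n ≤ short.ncard + 3 * K :=
    (langComplexity_union_le _ _ n).trans <| Nat.add_le_add
      (langComplexity_le_ncard (List.finite_length_lt α 4) n)
      (langComplexity_dyadicUnion_le (fun k n => (hL k n).trans (hK k)) 3 n)
  refine ⟨short ∪ dyadicUnion (fun k => wordsEndingAt u (P k)) 3,
    short ∪ dyadicUnion (fun k => wordsStartingAt u (P k)) 3, short.ncard + 3 * K,
    hbound fun k => langComplexity_wordsEndingAt_le u (P k),
    hbound fun k => langComplexity_wordsStartingAt_le u (P k), fun w hw => ?_⟩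
  rcases lt_or_ge w.length 4 with hshort | hlong
  · exact ⟨[], Or.inl (show 0 < 4 by norm_num), w, Or.inl hshort, rfl⟩
  obtain ⟨k, hk, hk'⟩ := exists_mul_two_pow_le_lt four_pos hlong
  replace hk' : w.length < 8 * 2 ^ k := by rwa [pow_succ', ← mul_assoc] at hk'
  obtain ⟨s, hs, t, ht, rfl, hlower, hupper⟩ :=
    (hP k).exists_eq_append hw (by omega) hk'.le
  rw [List.length_append] at hk hk'
  have hscale : 2 ^ (k + 3) = 8 * 2 ^ k := by ring
  exact ⟨s, Or.inr (Set.mem_iUnion.2 ⟨k, hs, by omega, by omega⟩),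
    t, Or.inr (Set.mem_iUnion.2 ⟨k, ht, by omega, by omega⟩), rfl⟩

end Cuts

/-- `𝓦₂ = 𝓟(1)`: an infinite word has linear subword complexity iff its set of
factors is contained in the concatenation `S·T` of two languages of bounded complexity. -/
theorem stmt1 {α : Type*} [Fintype α] (u : ℕ → α) :
    (∃ (S T : Set (List α)) (C : ℕ),
        (∀ n, langComplexity S n ≤ C) ∧ (∀ n, langComplexity T n ≤ C) ∧
        ∀ w ∈ Factors u, ∃ s ∈ S, ∃ t ∈ T, w = s ++ t) ↔
    (∃ C : ℕ, ∀ n, 1 ≤ n → complexity u n ≤ C * n) := by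
  constructor
  · rintro ⟨S, T, C, hS, hT, h⟩
    have hsub : Factors u ⊆ Set.image2 (· ++ ·) S T := fun w hw =>
      let ⟨s, hs, t, ht, hst⟩ := h w hw
      ⟨s, hs, t, ht, hst.symm⟩
    refine ⟨2 * (C * C), fun n hn => ?_⟩
    calc complexity u n ≤ (n + 1) * (C * C) := complexity_le_of_factors_subset_image2 hS hT hsub n
      _ ≤ (2 * n) * (C * C) := Nat.mul_le_mul_right _ (by omega)
      _ = 2 * (C * C) * n := by ring
  · rintro ⟨C, hC⟩
    choose P hP hPcard using fun k : ℕ => exists_isCutSet_card_le hC (2 ^ k) 8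
    exact exists_langComplexity_le_of_isCutSet hP hPcard
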